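/- Let q > 1 be an odd integer, k ≥ 1, and a_1, ..., a_k, b_1, ..., b_k ≥ 1 integers with Σ_{i=1}^{k}(a_i + b_i) = q; let w ∈ {0,1}^q be the binary word 0^{a_1} 1^{b_1} 0^{a_2} 1^{b_2} ⋯ 0^{a_k} 1^{b_k}. Let S_w be the set of all sequences 1 ≤ s_1 < s_2 < ⋯ < s_{2l} ≤ q of even positive length 2l (l > 0) such that w_{s_i} ≠ w_{s_{i+1}} for all i = 1, ..., 2l-1. For s ∈ S_w let p(w,s) = g_1 g_2 ⋯ g_q ∈ M_2(Z), where g_i = h if i does not occur in s, g_i = e if i occurs in s and w_i = 0, and g_i = f if i occurs in s and w_i = 1. Then Σ_{s ∈ S_w} tr(p(w,s)) = 0. -/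

import Mathlib

/-!
Summing over all subsets `S`, and not only over the good ones, changes nothing: if the letters at
the positions of `S` do not alternate then `p(w,S)` contains a factor `± e e` or `± f f` and
vanishes (`prod_eq_zero_of_not_isChain`); if `|S|` is odd then `p(w,S)` is antidiagonal
(`prod_parity`); and for `S = ∅` the trace is `tr (h ^ q) = tr h = 0`, because `q` is odd.
By multilinearity the sum of `p(w,S)` over all `S` is the product of the matrices `gᵢ + h`, where
`gᵢ` is `e` or `f` (`sum_wordProd`). Both `A = e + h` and `B = f + h` are involutions and
`A B + B A = 3`, so a product of an even number of them lies in the span of `1` and `A B`, while a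
product of an odd number lies in the span of `A` and `B`, which consists of traceless matrices
(`prod_letter_add_h`).
-/

noncomputable section

/-- The matrices `e`, `h`, `f` in `M₂(ℤ)`. -/
def eM : Matrix (Fin 2) (Fin 2) ℤ := !![0, 1; 0, 0]
def hM : Matrix (Fin 2) (Fin 2) ℤ := !![1, 0; 0, -1]
def fM : Matrix (Fin 2) (Fin 2) ℤ := !![0, 0; 1, 0]

/-- `p(w,S) = g₁ g₂ ⋯ g_q`, where `gᵢ = h` if `i ∉ S`, `gᵢ = e` if `i ∈ S` and `wᵢ = 0`,
and `gᵢ = f` if `i ∈ S` and `wᵢ = 1`. -/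
def wordProd {q : ℕ} (w : Fin q → Fin 2) (S : Finset (Fin q)) : Matrix (Fin 2) (Fin 2) ℤ :=
  (List.ofFn fun i : Fin q => if i ∈ S then (if w i = 0 then eM else fM) else hM).prod

/-- `S` represents a sequence `1 ≤ s₁ < ⋯ < s_{2l} ≤ q` of even positive length such that
`w_{sᵢ} ≠ w_{s_{i+1}}` for all `i`. -/
def goodSeq {q : ℕ} (w : Fin q → Fin 2) (S : Finset (Fin q)) : Prop :=
  S.Nonempty ∧ Even S.card ∧ ((S.sort (· ≤ ·)).map w).Chain' (· ≠ ·)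

/-- The matrix attached to a letter: `e` for `0` and `f` for `1`. -/
def letterM (c : Fin 2) : Matrix (Fin 2) (Fin 2) ℤ := if c = 0 then eM else fM

/-- The product of the matrices selected by a set `p` of positions, along a list of positions. -/
def selProd {α : Type*} (w : α → Fin 2) (p : α → Bool) (l : List α) :
    Matrix (Fin 2) (Fin 2) ℤ :=
  (l.map fun i => if p i then letterM (w i) else hM).prod

lemma selProd_cons {α : Type*} (w : α → Fin 2) (p : α → Bool) (x : α) (l : List α) :
    selProd w p (x :: l) = (if p x then letterM (w x) else hM) * selProd w p l := by
  simp [selProd]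

lemma prod_parity {α : Type*} (w : α → Fin 2) (p : α → Bool) (l : List α) :
    (Even (l.filter p).length → selProd w p l 0 1 = 0 ∧ selProd w p l 1 0 = 0) ∧
    (¬ Even (l.filter p).length → selProd w p l 0 0 = 0 ∧ selProd w p l 1 1 = 0) := by
  induction l with
  | nil => simp [selProd]
  | cons x l ih =>
    rw [selProd_cons]
    by_cases hx : p x
    · by_cases hc : w x = 0 <;> by_cases he : Even (l.filter p).length <;>
        simp_all [letterM, eM, fM, Matrix.mul_apply, Fin.sum_univ_two, Nat.even_add_one]
    · by_cases he : Even (l.filter p).length <;>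
        simp_all [hM, Matrix.mul_apply, Fin.sum_univ_two]

/-- If the first selected letter is `0`, the product starts with `± e` and its bottom row vanishes;
if it is `1`, the product starts with `± f` and its top row vanishes. -/
lemma row_eq_zero {α : Type*} (w : α → Fin 2) (p : α → Bool) (l : List α) (y : α)
    (hy : (l.filter p).head? = some y) (j : Fin 2) : selProd w p l (1 - w y) j = 0 := by
  induction l with
  | nil => simp at hy
  | cons x l ih =>
    rw [selProd_cons]
    by_cases hx : p x
    · obtain rfl : x = y := by simpa [hx] using hy
      have h2 : w x = 0 ∨ w x = 1 := by omega
      rcases h2 with hc | hc <;>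
        simp [hx, hc, letterM, eM, fM, Matrix.mul_apply, Fin.sum_univ_two]
    · have ih' := ih (by simpa [hx] using hy)
      have h2 : w y = 0 ∨ w y = 1 := by omega
      rcases h2 with hc | hc <;> rw [hc] at ih' ⊢ <;>
        simp_all [hM, Matrix.mul_apply, Fin.sum_univ_two]

lemma prod_eq_zero_of_not_isChain {α : Type*} (w : α → Fin 2) (p : α → Bool) (l : List α)
    (hl : ¬ ((l.filter p).map w).IsChain (· ≠ ·)) : selProd w p l = 0 := by
  induction l with
  | nil => simp at hl
  | cons x l ih =>
    rw [selProd_cons]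
    by_cases hx : p x
    · by_cases hch : ((l.filter p).map w).IsChain (· ≠ ·)
      -- the chain breaks between `x` and the next selected position, which carries the same letter
      · cases hf : l.filter p with
        | nil => simp [hx, hf] at hl
        | cons y t =>
          have hrow := row_eq_zero w p l y (by simp [hf])
          have hxy : w x = w y := by
            by_contra hne
            apply hl
            rw [hf] at hch
            simp only [List.filter_cons, hx, if_true, hf, List.map_cons] at hch ⊢
            exact List.isChain_cons_cons.2 ⟨hne, hch⟩
          have h2 : w y = 0 ∨ w y = 1 := by omega
          rw [if_pos hx, hxy]
          rcases h2 with hc | hc <;> rw [hc] at hrow ⊢ <;> ext i j <;> have := hrow j <;>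
            fin_cases i <;>
            simp_all [letterM, eM, fM, Matrix.mul_apply, Fin.sum_univ_two]
      · rw [ih hch, mul_zero]
    · rw [ih (by simpa [hx] using hl), mul_zero]

/-- The equations in the conclusion describe the span of `1` and `A B` (even length) and the span
of `A` and `B` (odd length), for `A = e + h` and `B = f + h`. -/
lemma prod_letter_add_h (l : List (Fin 2)) :
    let M := (l.map fun c => letterM c + hM).prod
    (Even l.length → M 0 1 = M 1 0 ∧ M 0 0 = M 1 1 - M 0 1) ∧
    (¬ Even l.length → M 0 0 = M 0 1 + M 1 0 ∧ M 1 1 = - M 0 0) := by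
  induction l with
  | nil => simp
  | cons c l ih =>
    simp only [List.map_cons, List.prod_cons, List.length_cons, Nat.even_add_one] at ih ⊢
    generalize (l.map fun c => letterM c + hM).prod = M at ih ⊢
    have h2 : c = 0 ∨ c = 1 := by omega
    by_cases he : Even l.length
    · obtain ⟨h1, h3⟩ := ih.1 he
      rcases h2 with rfl | rfl <;>
        simp [he, letterM, eM, fM, hM, Matrix.mul_apply, Fin.sum_univ_two] <;> omega
    · obtain ⟨h1, h3⟩ := ih.2 he
      rcases h2 with rfl | rfl <;>
        simp [he, letterM, eM, fM, hM, Matrix.mul_apply, Fin.sum_univ_two] <;> omega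

lemma wordProd_eq_selProd {q : ℕ} (w : Fin q → Fin 2) (S : Finset (Fin q)) :
    wordProd w S = selProd w (fun i => decide (i ∈ S)) (List.finRange q) := by
  simp [wordProd, selProd, letterM, List.ofFn_eq_map]

lemma sort_eq_filter_finRange {q : ℕ} (S : Finset (Fin q)) :
    S.sort (· ≤ ·) = (List.finRange q).filter (fun i => decide (i ∈ S)) := by
  refine List.Perm.eq_of_pairwise (le := (· ≤ ·)) (fun a b _ _ h1 h2 => le_antisymm h1 h2)
    (S.pairwise_sort _) ((List.pairwise_le_finRange q).filter _) ?_
  rw [List.perm_ext_iff_of_nodup (S.sort_nodup _) ((List.nodup_finRange q).filter _)]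
  simp

lemma sum_wordProd {q : ℕ} (w : Fin q → Fin 2) :
    ∑ S : Finset (Fin q), wordProd w S = (List.ofFn fun i => letterM (w i) + hM).prod := by
  have := (MultilinearMap.mkPiAlgebraFin ℤ q (Matrix (Fin 2) (Fin 2) ℤ)).map_add_univ
    (fun i => letterM (w i)) (fun _ => hM)
  simp only [MultilinearMap.mkPiAlgebraFin_apply] at this
  refine Eq.trans (Finset.sum_congr rfl fun S _ => ?_) this.symm
  simp only [wordProd, letterM]
  congr 2

lemma trace_eq_zero_of_not_goodSeq {q : ℕ} (hq : Odd q) (w : Fin q → Fin 2) (S : Finset (Fin q))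
    (hS : ¬ goodSeq w S) : (wordProd w S).trace = 0 := by
  rcases S.eq_empty_or_nonempty with rfl | hne
  · obtain ⟨m, rfl⟩ := hq
    have hh : hM * hM = 1 := by decide
    have : wordProd w ∅ = hM := by
      simp [wordProd, List.ofFn_const, pow_mul, pow_two, hh]
    rw [this]; decide
  · by_cases he : Even S.card
    · rw [wordProd_eq_selProd, prod_eq_zero_of_not_isChain, Matrix.trace_zero]
      intro hch
      rw [← sort_eq_filter_finRange] at hch
      exact hS ⟨hne, he, hch⟩
    · have hpar := (prod_parity w (fun i => decide (i ∈ S)) (List.finRange q)).2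
      rw [← sort_eq_filter_finRange, Finset.length_sort, ← wordProd_eq_selProd] at hpar
      obtain ⟨h0, h1⟩ := hpar he
      rw [Matrix.trace_fin_two, h0, h1, add_zero]

open Classical in
theorem statement7 (q K : ℕ) (hq : Odd q) (hq1 : 1 < q) (hK : 1 ≤ K)
    (a b : Fin K → ℕ) (ha : ∀ i, 1 ≤ a i) (hb : ∀ i, 1 ≤ b i)
    (hsum : ∑ i, (a i + b i) = q) (w : Fin q → Fin 2)
    (hw : List.ofFn w =
      (List.finRange K).flatMap fun i => List.replicate (a i) 0 ++ List.replicate (b i) 1) :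
    ∑ S ∈ Finset.univ.filter (goodSeq w), (wordProd w S).trace = 0 := by
  rw [Finset.sum_filter_of_ne fun S _ hS => by
      by_contra hgood
      exact hS (trace_eq_zero_of_not_goodSeq hq w S hgood),
    ← Matrix.trace_sum, sum_wordProd]
  have hodd := (prod_letter_add_h (List.ofFn w)).2
  rw [List.length_ofFn, List.map_ofFn] at hodd
  have h11 := (hodd (Nat.not_even_iff_odd.2 hq)).2
  rw [Matrix.trace_fin_two]
  change _ = - _ at h11
  simp only [Function.comp_def] at h11
  rw [h11, add_neg_cancel]
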